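/- There are no integers M, d, g with M ≥ 3, d ≥ 2M+1, g ≥ 2 and 2g ≤ (d−1)(d−2) satisfying (over the rationals) g ≤ (1/2)·((2g−2+2d)/M − 1)·((2g−2+2d)/M − 2) − ((M+1)(2g−2)+3d)·(1/2)·((d−1)/M)·((d−1)/M − 1). -/

import Mathlib

/-!
Put `G = 2g - 2`, `e = d - 1` and clear the denominator `2M²`. The claim becomes `F G < 0` on
`2 ≤ G ≤ T`, where `T = (e - 2)(e + 1)` and
`F G = (G + 2e + 2 - M)(G + 2e + 2 - 2M) - ((M + 1)G + 3e + 3) e (e - M) - (G + 2)M²`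
is a monic quadratic in `G`. Hence `F G = (G - 2)(G - T) + α (G - 2) + F 2`, where `α` does not
depend on `G`. The first term is nonpositive on the interval, and `M ≥ 3`, `e ≥ 2M` give `α ≤ 0`
and `F 2 < 0`.
-/

/-- The slope `α` of the chord of `F` between `2` and `T` is nonpositive. -/
lemma slope_nonpos {M e : ℤ} (hM : 3 ≤ M) (he : 2 * M ≤ e) :
    (e - 2) * (e + 1) + 2 + (4 * e + 4 - 3 * M) - (M + 1) * e * (e - M) - M ^ 2 ≤ 0 := by
  obtain ⟨a, rfl⟩ : ∃ a, M = a + 3 := ⟨M - 3, by ring⟩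
  obtain ⟨b, rfl⟩ : ∃ b, e = 2 * (a + 3) + b := ⟨e - 2 * (a + 3), by ring⟩
  have ha : 0 ≤ a := by linarith
  have hb : 0 ≤ b := by linarith
  rw [← neg_nonneg]
  ring_nf
  positivity

/-- The value `F 2` at the left endpoint is negative. -/
lemma left_endpoint_neg {M e : ℤ} (hM : 3 ≤ M) (he : 2 * M ≤ e) :
    (2 * e + 4 - M) * (2 * e + 4 - 2 * M) - ((M + 1) * 2 + 3 * e + 3) * e * (e - M)
      - 4 * M ^ 2 < 0 := by
  obtain ⟨a, rfl⟩ : ∃ a, M = a + 3 := ⟨M - 3, by ring⟩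
  obtain ⟨b, rfl⟩ : ∃ b, e = 2 * (a + 3) + b := ⟨e - 2 * (a + 3), by ring⟩
  have ha : 0 ≤ a := by linarith
  have hb : 0 ≤ b := by linarith
  rw [← neg_pos]
  ring_nf
  positivity


/-- The arithmetic contradiction of Section 4 (case `M(C) ≥ 3`, `g ≥ 2`, `d − 1 > M(C)`):
there are no integers `M ≥ 3`, `d ≥ 2M+1`, `g ≥ 2` with `2g ≤ (d−1)(d−2)` satisfying,
over the rationals,
`g ≤ (1/2)((2g−2+2d)/M − 1)((2g−2+2d)/M − 2) − ((M+1)(2g−2)+3d)·(1/2)·((d−1)/M)·((d−1)/M − 1)`. -/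
theorem no_solution_high_contact_genus_ge_two :
    ¬ ∃ M d g : ℤ, 3 ≤ M ∧ 2 * M + 1 ≤ d ∧ 2 ≤ g ∧ 2 * g ≤ (d - 1) * (d - 2) ∧
      (g : ℚ) ≤ (1 / 2) * ((2 * (g : ℚ) - 2 + 2 * (d : ℚ)) / (M : ℚ) - 1) *
          ((2 * (g : ℚ) - 2 + 2 * (d : ℚ)) / (M : ℚ) - 2) -
        (((M : ℚ) + 1) * (2 * (g : ℚ) - 2) + 3 * (d : ℚ)) * (1 / 2) *
          (((d : ℚ) - 1) / (M : ℚ)) * (((d : ℚ) - 1) / (M : ℚ) - 1) := by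
  rintro ⟨M, d, g, hM, hd, hg, hgd, h⟩
  have hMQ : (M : ℚ) ≠ 0 := by
    have : M ≠ 0 := by omega
    exact_mod_cast this
  have hZ : 2 * g * M ^ 2 ≤ (2 * g - 2 + 2 * d - M) * (2 * g - 2 + 2 * d - 2 * M)
      - ((M + 1) * (2 * g - 2) + 3 * d) * (d - 1) * (d - 1 - M) := by
    have h2 := mul_le_mul_of_nonneg_right h (by positivity : (0 : ℚ) ≤ 2 * (M : ℚ) ^ 2)
    field_simp at h2
    qify
    linarith
  have hα := slope_nonpos hM (e := d - 1) (by linarith)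
  have h₂ := left_endpoint_neg hM (e := d - 1) (by linarith)
  have hG : 0 ≤ 2 * g - 2 - 2 := by linarith
  have hT : 2 * g - 2 - (d - 1 - 2) * (d - 1 + 1) ≤ 0 := by linarith
  have hquad := mul_nonpos_of_nonneg_of_nonpos hG hT
  have hlin := mul_nonpos_of_nonneg_of_nonpos hG hα
  linarith
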